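/- A function f : SL(2,ℂ) → ℂ that is the restriction of a polynomial in the four matrix entries satisfies f(g·u) = f(g) for all g ∈ SL(2,ℂ) and all upper triangular u with unit diagonal if and only if there exists a polynomial Φ ∈ ℂ[s,t] with f(g) = Φ(g₁₁, g₂₁) for all g ∈ SL(2,ℂ); moreover this Φ is unique, i.e. the functions g ↦ g₁₁ and g ↦ g₂₁ are algebraically independent over ℂ as functions on SL(2,ℂ). -/

import Mathlib

open Matrix

/-- Evaluation of a polynomial in the four matrix entries at a `2 × 2` matrix. -/
noncomputable def evalMat (F : MvPolynomial (Fin 2 × Fin 2) ℂ)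
    (M : Matrix (Fin 2) (Fin 2) ℂ) : ℂ :=
  MvPolynomial.eval (fun p => M p.1 p.2) F

open MvPolynomial in
/-- Functions that become polynomial after multiplication by a power of the `i`-th coordinate. -/
def LocPoly (i : Fin 2) (f : (Fin 2 → ℂ) → ℂ) : Prop :=
  ∃ (N : ℕ) (P : MvPolynomial (Fin 2) ℂ), ∀ x, x i ≠ 0 → x i ^ N * f x = eval x P

open MvPolynomial in
lemma LocPoly.comp (i : Fin 2) {σ : Type*} (v : σ → (Fin 2 → ℂ) → ℂ)
    (hv : ∀ s, LocPoly i (v s)) (F : MvPolynomial σ ℂ) :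
    LocPoly i (fun x => eval (fun s => v s x) F) := by
  induction F using MvPolynomial.induction_on with
  | C a => exact ⟨0, C a, by simp⟩
  | add p q hp hq =>
    obtain ⟨N, P, hP⟩ := hp
    obtain ⟨M, Q, hQ⟩ := hq
    refine ⟨N + M, X i ^ M * P + X i ^ N * Q, fun x hx => ?_⟩
    simp only [map_add, map_mul, map_pow, eval_X, ← hP x hx, ← hQ x hx]
    ring
  | mul_X p s hp =>
    obtain ⟨N, P, hP⟩ := hp
    obtain ⟨M, Q, hQ⟩ := hv s
    refine ⟨N + M, P * Q, fun x hx => ?_⟩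
    simp only [map_mul, eval_X, ← hP x hx, ← hQ x hx]
    ring

open MvPolynomial in
lemma eq_of_agree (P Q : MvPolynomial (Fin 2) ℂ)
    (h : ∀ x : Fin 2 → ℂ, x 0 ≠ 0 → x 1 ≠ 0 → eval x P = eval x Q) : P = Q := by
  have h1 : (X 0 * X 1 : MvPolynomial (Fin 2) ℂ) * P = X 0 * X 1 * Q := by
    apply MvPolynomial.funext
    intro x
    simp only [map_mul, eval_X]
    by_cases h0 : x 0 = 0
    · simp [h0]
    by_cases h1 : x 1 = 0
    · simp [h1]
    rw [h x h0 h1]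
  exact mul_left_cancel₀ (mul_ne_zero (X_ne_zero _) (X_ne_zero _)) h1

lemma exists_sl (x : Fin 2 → ℂ) (h : x 0 ≠ 0) :
    ∃ g : Matrix.SpecialLinearGroup (Fin 2) ℂ,
      (g : Matrix (Fin 2) (Fin 2) ℂ) = !![x 0, 0; x 1, (x 0)⁻¹] :=
  ⟨⟨!![x 0, 0; x 1, (x 0)⁻¹], by simp [Matrix.det_fin_two, h]⟩, rfl⟩

open MvPolynomial in
lemma forward (F : MvPolynomial (Fin 2 × Fin 2) ℂ)
    (hF : ∀ (g : Matrix.SpecialLinearGroup (Fin 2) ℂ) (t : ℂ),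
      evalMat F ((g : Matrix (Fin 2) (Fin 2) ℂ) * !![1, t; 0, 1]) =
        evalMat F (g : Matrix (Fin 2) (Fin 2) ℂ)) :
    ∃ Φ : MvPolynomial (Fin 2) ℂ, ∀ g : Matrix.SpecialLinearGroup (Fin 2) ℂ,
      evalMat F (g : Matrix (Fin 2) (Fin 2) ℂ) =
        eval (fun s : Fin 2 => (g : Matrix (Fin 2) (Fin 2) ℂ) s 0) Φ := by
  have e0 : LocPoly 0 (fun x => evalMat F !![x 0, 0; x 1, (x 0)⁻¹]) := by
    unfold evalMat
    refine LocPoly.comp 0 (σ := Fin 2 × Fin 2)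
      (fun p x => (!![x 0, 0; x 1, (x 0)⁻¹] : Matrix (Fin 2) (Fin 2) ℂ) p.1 p.2) ?_ F
    rintro ⟨a, b⟩
    fin_cases a <;> fin_cases b
    · exact ⟨0, X 0, by simp⟩
    · exact ⟨0, 0, by simp⟩
    · exact ⟨0, X 1, by simp⟩
    · exact ⟨1, 1, fun x hx => by simp [hx]⟩
  have e1 : LocPoly 1 (fun x => evalMat F !![x 0, -(x 1)⁻¹; x 1, 0]) := by
    unfold evalMat
    refine LocPoly.comp 1 (σ := Fin 2 × Fin 2)
      (fun p x => (!![x 0, -(x 1)⁻¹; x 1, 0] : Matrix (Fin 2) (Fin 2) ℂ) p.1 p.2) ?_ F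
    rintro ⟨a, b⟩
    fin_cases a <;> fin_cases b
    · exact ⟨0, X 0, by simp⟩
    · exact ⟨1, -1, fun x hx => by simp [hx]⟩
    · exact ⟨0, X 1, by simp⟩
    · exact ⟨0, 0, by simp⟩
  obtain ⟨N, P, hP⟩ := e0
  obtain ⟨M, Q, hQ⟩ := e1
  have r0 : ∀ g : Matrix.SpecialLinearGroup (Fin 2) ℂ, g.1 0 0 ≠ 0 →
      evalMat F g.1 = evalMat F !![g.1 0 0, 0; g.1 1 0, (g.1 0 0)⁻¹] := by
    intro g hg
    have hd := g.2
    rw [Matrix.det_fin_two] at hd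
    rw [← hF g (-(g.1 0 1) / g.1 0 0)]
    congr 1
    ext i j
    fin_cases i <;> fin_cases j <;> simp [Matrix.mul_apply, Fin.sum_univ_two] <;> field_simp
    · ring
    · linear_combination hd
  have r1 : ∀ g : Matrix.SpecialLinearGroup (Fin 2) ℂ, g.1 1 0 ≠ 0 →
      evalMat F g.1 = evalMat F !![g.1 0 0, -(g.1 1 0)⁻¹; g.1 1 0, 0] := by
    intro g hg
    have hd := g.2
    rw [Matrix.det_fin_two] at hd
    rw [← hF g (-(g.1 1 1) / g.1 1 0)]
    congr 1
    ext i j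
    fin_cases i <;> fin_cases j <;> simp [Matrix.mul_apply, Fin.sum_univ_two] <;> field_simp
    · linear_combination -hd
    · ring
  have key : X 1 ^ M * P = X 0 ^ N * Q := by
    apply eq_of_agree
    intro x h0 h1
    obtain ⟨g, hg⟩ := exists_sl x h0
    have a0 := r1 g (by rw [hg]; simpa using h1)
    rw [hg] at a0
    simp at a0
    simp only [map_mul, map_pow, eval_X, ← hP x h0, ← hQ x h1, a0]
    ring
  have hnd : ¬ (X 0 : MvPolynomial (Fin 2) ℂ) ∣ X 1 ^ M := by
    intro h
    have := (X_prime (R := ℂ) (i := (0 : Fin 2))).dvd_of_dvd_pow h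
    simp [X_dvd_X] at this
  obtain ⟨Φ, rfl⟩ := (X_prime (R := ℂ) (i := (0 : Fin 2))).pow_dvd_of_dvd_mul_left N hnd ⟨Q, key⟩
  have hQ' : Q = X 1 ^ M * Φ := by
    apply mul_left_cancel₀ (pow_ne_zero N (X_ne_zero (R := ℂ) (0 : Fin 2)))
    rw [← key]; ring
  subst hQ'
  refine ⟨Φ, fun g => ?_⟩
  by_cases h0 : g.1 0 0 = 0
  · have h1 : g.1 1 0 ≠ 0 := by
      intro h1
      have hd := g.2
      rw [Matrix.det_fin_two, h0, h1] at hd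
      simp at hd
    have := hQ (fun s => g.1 s 0) h1
    simp only [map_mul, map_pow, eval_X] at this
    rw [r1 g h1]
    exact mul_left_cancel₀ (pow_ne_zero M h1) this
  · have := hP (fun s => g.1 s 0) h0
    simp only [map_mul, map_pow, eval_X] at this
    rw [r0 g h0]
    exact mul_left_cancel₀ (pow_ne_zero N h0) this

/-- A polynomial function on `SL(2, ℂ)` is invariant under right multiplication
by upper triangular matrices with unit diagonal if and only if it is a
polynomial `Φ` in the first-column entries `g₁₁, g₂₁`; moreover such a `Φ` is
unique, i.e. `g ↦ g₁₁` and `g ↦ g₂₁` are algebraically independent over `ℂ`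
as functions on `SL(2, ℂ)`. -/
theorem sl2_right_invariants (F : MvPolynomial (Fin 2 × Fin 2) ℂ) :
    ((∀ (g : Matrix.SpecialLinearGroup (Fin 2) ℂ) (u : Matrix (Fin 2) (Fin 2) ℂ),
        (∀ k, u k k = 1) → (∀ k l : Fin 2, l < k → u k l = 0) →
        evalMat F ((g : Matrix (Fin 2) (Fin 2) ℂ) * u) =
          evalMat F (g : Matrix (Fin 2) (Fin 2) ℂ)) ↔
      (∃ Φ : MvPolynomial (Fin 2) ℂ,
        ∀ g : Matrix.SpecialLinearGroup (Fin 2) ℂ,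
          evalMat F (g : Matrix (Fin 2) (Fin 2) ℂ) =
            MvPolynomial.eval (fun s : Fin 2 => (g : Matrix (Fin 2) (Fin 2) ℂ) s 0) Φ)) ∧
    (∀ Φ : MvPolynomial (Fin 2) ℂ,
      (∀ g : Matrix.SpecialLinearGroup (Fin 2) ℂ,
        MvPolynomial.eval (fun s : Fin 2 => (g : Matrix (Fin 2) (Fin 2) ℂ) s 0) Φ = 0) →
      Φ = 0) := by
  refine ⟨⟨fun h => ?_, ?_⟩, fun Φ h => ?_⟩
  · apply forward F
    intro g t
    apply h g
    · intro k; fin_cases k <;> simp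
    · intro k l hkl
      fin_cases k <;> fin_cases l <;> simp at hkl ⊢
  · rintro ⟨Φ, hΦ⟩ g u h1 h0
    have h10 : u 1 0 = 0 := h0 1 0 (by simp)
    have hdet : u.det = 1 := by
      rw [Matrix.det_fin_two, h1, h1, h10]; simp
    have e := hΦ (g * ⟨u, hdet⟩)
    change evalMat F ((g : Matrix (Fin 2) (Fin 2) ℂ) * u) = _ at e
    rw [e, hΦ g]
    congr 2
    funext s
    change ((g : Matrix (Fin 2) (Fin 2) ℂ) * u) s 0 = _
    rw [Matrix.mul_apply, Fin.sum_univ_two, h1, h10]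
    simp
  · apply eq_of_agree
    intro x h0 _
    obtain ⟨g, hg⟩ := exists_sl x h0
    have e := h g
    rw [map_zero, ← e]
    congr 2
    funext s
    rw [hg]
    fin_cases s <;> simp
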